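/- There exists a class of languages learnable by a monotone behaviorally correct full-information learner from informants but not by any dual monotone one: [Inf G Mon Bc] \ [Inf G Mon^d Bc] ≠ ∅; in fact, with a_i = 3i, b_i = 3i+1, c_i = 3i+2, the class consisting of X = {a_i | i ∈ ℕ}, all Y_n = {a_i | i ≤ n} ∪ {b_i | n < i}, and all Z_{n,m} = {a_i | i ≤ n} ∪ {b_i | n < i ≤ m} ∪ {c_m} for n < m witnesses this separation. -/

import Mathlib

open Filter Classical

namespace InfBc

/-! ### Basic notions: r.e. sets, informants, learners -/

/-- The `e`-th recursively enumerable set (via an acceptable numbering of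
partial computable functions, `W e = dom φ_e`). -/
def W (e : ℕ) : Set ℕ := {x | ((Denumerable.ofNat Nat.Partrec.Code e).eval x).Dom}

/-- A language is recursively enumerable. -/
def RE (L : Set ℕ) : Prop := ∃ e, W e = L

abbrev Datum := ℕ × Bool
abbrev Seq := List Datum
abbrev Informant := ℕ → Datum
abbrev HypSeq := ℕ → Part ℕ
/-- Learners are partial functions; all input types are coded into `ℕ`. -/
abbrev Learner := ℕ →. ℕ
abbrev Restriction := HypSeq → Informant → Prop

/-- Positive information of an infinite sequence. -/
def posI (I : Informant) : Set ℕ := {x | ∃ n, I n = (x, true)}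
/-- Negative information of an infinite sequence. -/
def negI (I : Informant) : Set ℕ := {x | ∃ n, I n = (x, false)}

/-- `I` is an informant for the language `L`. -/
def IsInformant (I : Informant) (L : Set ℕ) : Prop := posI I = L ∧ negI I = Lᶜ

/-- `I` is an informant (for some language), i.e. `I ∈ Inf`. -/
def IsInf (I : Informant) : Prop := IsInformant I (posI I)

/-- `I` is a canonical informant. -/
def Canonical (I : Informant) : Prop := ∀ x, I x = (x, true) ∨ I x = (x, false)

/-- `I[n]`, the length-`n` initial segment of `I`. -/
def segment (I : Informant) (n : ℕ) : Seq := (List.range n).map I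

/-- Positive information of a finite sequence. -/
def posS (σ : Seq) : Set ℕ := {x | (x, true) ∈ σ}
/-- Negative information of a finite sequence. -/
def negS (σ : Seq) : Set ℕ := {x | (x, false) ∈ σ}
/-- The content of a finite sequence, as a set. -/
def contentS (σ : Seq) : Set Datum := {a | a ∈ σ}

/-! ### Interaction operators -/

abbrev InteractionOperator := Learner → Informant → HypSeq

/-- Full-information (Gold-style) interaction: `G(h,I)(i) = h(I[i])`. -/
def Gop : InteractionOperator := fun h I i => h (Encodable.encode (segment I i))

/-- Set-driven interaction: `Sd(h,I)(i) = h(content(I[i]))`. -/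
def Sdop : InteractionOperator := fun h I i => h (Encodable.encode (segment I i).toFinset)

/-- The iterated evaluation of an iterative learner on a finite sequence:
start with the initial hypothesis `h(none)` and feed the data one by one. -/
def iterExtend (h : Learner) (σ : Seq) : Part ℕ :=
  σ.foldl (fun pe a => pe.bind fun e => h (Encodable.encode (some (e, a))))
    (h (Encodable.encode (none : Option (ℕ × Datum))))

/-- Iterative interaction: `It(h,I)(i)` is obtained by feeding `I[i]` one datum
at a time, each time updating the previous hypothesis. -/
def Itop : InteractionOperator := fun h I i => iterExtend h (segment I i)

/-- An iterative learner is confluent if the order and multiplicity in which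
the content is presented does not matter. -/
def ConfluentLearner (h : Learner) : Prop :=
  ∀ σ τ : Seq, contentS σ = contentS τ → iterExtend h σ = iterExtend h τ

/-- Confluently iterative interaction. -/
noncomputable def CflItop : InteractionOperator := fun h I i =>
  if ConfluentLearner h then iterExtend h (segment I i) else Part.none

/-- `β ≼ β'`: every (partial computable) `β`-learner can be translated into a
`β'`-learner with the same hypothesis sequence on every informant. -/
def OpLe (β β' : InteractionOperator) : Prop :=
  ∀ h : Learner, Partrec h → ∃ h' : Learner, Partrec h' ∧
    ∀ I : Informant, IsInf I → ∀ n, β h I n = β' h' I n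

/-! ### Learning restrictions -/

/-- The trivial restriction `T`. -/
def TT : Restriction := fun _ _ => True

/-- Explanatory identification. -/
def Ex : Restriction := fun p I =>
  ∃ q, W q = posI I ∧ ∀ᶠ n in atTop, p n = Part.some q

/-- Behaviorally correct identification. -/
def Bc : Restriction := fun p I => ∀ᶠ n in atTop, ∃ e ∈ p n, W e = posI I

/-- Consistency of a hypothesis with a finite sequence of data. -/
def ConsH (e : ℕ) (σ : Seq) : Prop := posS σ ⊆ W e ∧ negS σ ∩ W e = ∅

/-- Consistency of a hypothesis sequence with an informant. -/
def Cons : Restriction := fun p I => ∀ n, ∃ e ∈ p n, ConsH e (segment I n)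

/-- Strongly monotone. -/
def SMon : Restriction := fun p _ =>
  ∀ s t, s ≤ t → ∀ e ∈ p s, ∀ e' ∈ p t, W e ⊆ W e'

/-- Dual strongly monotone. -/
def SMond : Restriction := fun p _ =>
  ∀ s t, s ≤ t → ∀ e ∈ p s, ∀ e' ∈ p t, W e' ⊆ W e

/-- Monotone. -/
def Mon : Restriction := fun p I =>
  ∀ s t, s ≤ t → ∀ e ∈ p s, ∀ e' ∈ p t, W e ∩ posI I ⊆ W e' ∩ posI I

/-- Dual monotone. -/
def Mond : Restriction := fun p I =>
  ∀ s t, s ≤ t → ∀ e ∈ p s, ∀ e' ∈ p t, (W e)ᶜ ∩ negI I ⊆ (W e')ᶜ ∩ negI I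

/-- Weakly monotone. -/
def WMon : Restriction := fun p I =>
  ∀ s t, s ≤ t → ∀ e ∈ p s, ConsH e (segment I t) → ∀ e' ∈ p t, W e ⊆ W e'

/-- Dual weakly monotone. -/
def WMond : Restriction := fun p I =>
  ∀ s t, s ≤ t → ∀ e ∈ p s, ConsH e (segment I t) → ∀ e' ∈ p t, W e' ⊆ W e

/-- Cautious. -/
def Caut : Restriction := fun p _ =>
  ∀ s t, s < t → ∀ e ∈ p s, ∀ e' ∈ p t, ¬ W e' ⊂ W e

/-- Target cautious. -/
def CautTar : Restriction := fun p I =>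
  ∀ s, ∀ e ∈ p s, ¬ posI I ⊂ W e

/-- Finitely cautious. -/
def CautFin : Restriction := fun p _ =>
  ∀ s t, s < t → ∀ e ∈ p s, ∀ e' ∈ p t, W e' ⊂ W e → (W e').Infinite

/-- Infinitely cautious. -/
def CautInf : Restriction := fun p _ =>
  ∀ s t, s < t → ∀ e ∈ p s, ∀ e' ∈ p t, W e' ⊂ W e → (W e').Finite

/-! ### Learnability -/

/-- The class of admissible learners: all partial computable learners. -/
def AllL : Learner → Prop := fun _ => True
/-- The class of admissible learners: total computable learners (`ℛ`). -/
def TotalL : Learner → Prop := fun h => ∀ x, (h x).Dom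
/-- Admissible informants: all informants (`Inf`). -/
def AllI : Informant → Prop := fun _ => True

/-- `h` learns `L` in the setting given by admissible informants `P`,
interaction operator `β` and local restriction `δ`. -/
def LearnsWith (P : Informant → Prop) (β : InteractionOperator) (δ : Restriction)
    (h : Learner) (L : Set ℕ) : Prop :=
  RE L ∧ ∀ I : Informant, P I → IsInformant I L → δ (β h I) I

/-- `[τ(α) C P β δ]`: the collection of all classes of languages learnable by
some learner in `C` that satisfies the global restriction `α` on all admissible
informants, under interaction operator `β` and local restriction `δ`. -/
def Learnable (α : Restriction) (C : Learner → Prop) (P : Informant → Prop)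
    (β : InteractionOperator) (δ : Restriction) : Set (Set (Set ℕ)) :=
  {𝓛 | ∃ h : Learner, Partrec h ∧ C h ∧
        (∀ I : Informant, IsInf I → P I → α (β h I) I) ∧
        ∀ L ∈ 𝓛, LearnsWith P β δ h L}

/-! ### Properties of restrictions -/

/-- A learning restriction is delayable if it is preserved under postponing
hypotheses along a non-decreasing unbounded function. -/
def Delayable (δ : Restriction) : Prop :=
  ∀ I I' : Informant, IsInf I → IsInf I' → Set.range I = Set.range I' →
    ∀ (p : HypSeq) (s : ℕ → ℕ), Monotone s → (∀ m, ∃ n, m ≤ s n) →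
      δ p I → (∀ n, contentS (segment I (s n)) ⊆ contentS (segment I' n)) →
      δ (fun n => p (s n)) I'

/-- A learning restriction is semantic if it is indifferent to replacing the
hypothesis sequence by a semantically equivalent one. -/
def Semantic (δ : Restriction) : Prop :=
  ∀ (p p' : HypSeq) (I : Informant), δ p I →
    (∀ i, (p i).Dom ↔ (p' i).Dom) →
    (∀ i, ∀ e ∈ p i, ∀ e' ∈ p' i, W e = W e') →
    δ p' I


/-- `X = {a_i | i ∈ ℕ}` with `a_i = 3i`. -/
def X11 : Set ℕ := {x | ∃ i, x = 3 * i}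

/-- `Y_n = {a_i | i ≤ n} ∪ {b_i | n < i}` with `b_i = 3i + 1`. -/
def Y11 (n : ℕ) : Set ℕ :=
  {x | ∃ i, i ≤ n ∧ x = 3 * i} ∪ {x | ∃ i, n < i ∧ x = 3 * i + 1}

/-- `Z_{n,m} = {a_i | i ≤ n} ∪ {b_i | n < i ≤ m} ∪ {c_m}` with `c_m = 3m + 2`. -/
def Z11 (n m : ℕ) : Set ℕ :=
  {x | ∃ i, i ≤ n ∧ x = 3 * i} ∪ {x | ∃ i, n < i ∧ i ≤ m ∧ x = 3 * i + 1} ∪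
    {3 * m + 2}

/-- The witness class consisting of `X`, all `Y_n` and all `Z_{n,m}` (`n < m`). -/
def class11 : Set (Set ℕ) :=
  {X11} ∪ {S | ∃ n, S = Y11 n} ∪ {S | ∃ n m, n < m ∧ S = Z11 n m}

/-!
A dual monotone learner is fooled as follows. On the canonical informant for `X` it conjectures `X`
after some number `s` of data; changing the target to `Y_s` leaves those data unchanged, and it
conjectures `Y_s` after some `t ≥ s` data, which are also data for `Z_{s,t+1}`. On the latter target
it has therefore first excluded and then included `b_{t+2}`, which lies outside `Z_{s,t+1}`.

A monotone learner decides position by position. It conjectures `a_i` until it is told that some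
`a_j` with `j ≤ i` is missing, and from then on conjectures `b_i` unless some `c_m` with `m < i` is
present; it conjectures `c_i` once it has seen it. The first kind of evidence never removes an `a_i`
of the target, the second never removes a `b_i` of the target, so correct elements are never given
up.
-/

/-! ### Finite data -/

/-- The finite data sequence `σ` is consistent with the language `L`; this is `IsInformant` for
finite sequences, with inclusions in place of equalities. -/
def ConsistentWith (σ : Seq) (L : Set ℕ) : Prop := posS σ ⊆ L ∧ negS σ ⊆ Lᶜ

lemma mem_segment {I : Informant} {n : ℕ} {d : Datum} :
    d ∈ segment I n ↔ ∃ k < n, I k = d := by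
  simp [segment]

lemma segment_subset_segment (I : Informant) {s t : ℕ} (hst : s ≤ t) :
    segment I s ⊆ segment I t := fun _ hd =>
  let ⟨k, hk, hkd⟩ := mem_segment.1 hd
  mem_segment.2 ⟨k, hk.trans_le hst, hkd⟩

lemma consistentWith_segment {I : Informant} {L : Set ℕ} (hI : IsInformant I L) (n : ℕ) :
    ConsistentWith (segment I n) L := by
  constructor
  · intro x hx
    obtain ⟨k, -, hk⟩ := mem_segment.1 hx
    exact hI.1 ▸ ⟨k, hk⟩
  · intro x hx
    obtain ⟨k, -, hk⟩ := mem_segment.1 hx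
    exact hI.2 ▸ ⟨k, hk⟩

lemma eventually_mem_segment (I : Informant) (k : ℕ) : ∀ᶠ n in atTop, I k ∈ segment I n :=
  (eventually_gt_atTop k).mono fun _ hn => mem_segment.2 ⟨k, hn, rfl⟩

lemma eventually_subset_segment {I : Informant} {L : Set ℕ} (hI : IsInformant I L) {ρ : Seq}
    (hρ : ConsistentWith ρ L) : ∀ᶠ n in atTop, ρ ⊆ segment I n := by
  refine (eventually_all_finite ρ.finite_toSet).2 ?_
  suffices h : ∀ d ∈ ρ, ∃ k, I k = d from fun d hd =>
    let ⟨k, hk⟩ := h d hd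
    hk ▸ eventually_mem_segment I k
  rintro ⟨x, _ | _⟩ hd
  · exact hI.2.symm.subset (hρ.2 hd)
  · exact hI.1.symm.subset (hρ.1 hd)

/-! ### Dual monotone learning on canonical informants -/

/-- The canonical informant for `L`, listing the natural numbers in increasing order. -/
noncomputable def canonicalInformant (L : Set ℕ) : Informant := fun x => (x, decide (x ∈ L))

lemma posI_canonicalInformant (L : Set ℕ) : posI (canonicalInformant L) = L := by
  ext x
  simp [posI, canonicalInformant]

lemma negI_canonicalInformant (L : Set ℕ) : negI (canonicalInformant L) = Lᶜ := by
  ext x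
  simp [negI, canonicalInformant]

lemma isInformant_canonicalInformant (L : Set ℕ) : IsInformant (canonicalInformant L) L :=
  ⟨posI_canonicalInformant L, negI_canonicalInformant L⟩

lemma Gop_canonicalInformant_congr (h : Learner) {L L' : Set ℕ} {s : ℕ}
    (hLL' : ∀ x < s, (x ∈ L ↔ x ∈ L')) :
    Gop h (canonicalInformant L) s = Gop h (canonicalInformant L') s := by
  have segments_eq : segment (canonicalInformant L) s = segment (canonicalInformant L') s :=
    List.map_congr_left fun x hx => by simp [canonicalInformant, hLL' x (List.mem_range.1 hx)]
  simp only [Gop, segments_eq]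

lemma notMem_learnable_mond_bc {α : Restriction} {C : Learner → Prop} {P : Informant → Prop}
    {𝓛 : Set (Set ℕ)} {X : Set ℕ} (hP : ∀ L, P (canonicalInformant L)) (hX : X ∈ 𝓛)
    (hfool : ∀ s, ∃ Y ∈ 𝓛, ∀ t ≥ s, ∃ Z ∈ 𝓛,
      (∀ x < s, (x ∈ X ↔ x ∈ Z)) ∧ (∀ x < t, (x ∈ Y ↔ x ∈ Z)) ∧ ∃ x ∈ Y, x ∉ X ∧ x ∉ Z) :
    𝓛 ∉ Learnable α C P Gop (fun p I => Mond p I ∧ Bc p I) := by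
  rintro ⟨h, -, -, -, hlearns⟩
  have hmond (L : Set ℕ) (hL : L ∈ 𝓛) :
      Mond (Gop h (canonicalInformant L)) (canonicalInformant L) :=
    ((hlearns L hL).2 _ (hP L) (isInformant_canonicalInformant L)).1
  have hbc (L : Set ℕ) (hL : L ∈ 𝓛) :
      ∀ᶠ n in atTop, ∃ e ∈ Gop h (canonicalInformant L) n, W e = L := by
    simpa only [Bc, posI_canonicalInformant] using
      ((hlearns L hL).2 _ (hP L) (isInformant_canonicalInformant L)).2
  obtain ⟨s, e, he, rfl⟩ := (hbc X hX).exists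
  obtain ⟨Y, hY, hfoolY⟩ := hfool s
  obtain ⟨t, ⟨e', he', rfl⟩, hst⟩ := ((hbc Y hY).and (eventually_ge_atTop s)).exists
  obtain ⟨Z, hZ, hXZ, hYZ, x, hxY, hxX, hxZ⟩ := hfoolY t hst
  rw [Gop_canonicalInformant_congr h hXZ] at he
  rw [Gop_canonicalInformant_congr h hYZ] at he'
  exact (hmond Z hZ s t hst e he e' he' ⟨hxX, (negI_canonicalInformant Z).symm ▸ hxZ⟩).1 hxY

/-! ### Monotone learning from a uniformly enumerable family of conjectures -/

/-- The s-m-n theorem for the numbering `W`. -/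
lemma exists_computable_W_eq {α : Type*} [Primcodable α] {F : α → Set ℕ}
    (hF : REPred fun p : α × ℕ => p.2 ∈ F p.1) :
    ∃ f : α → ℕ, Computable f ∧ ∀ a, W (f a) = F a := by
  obtain ⟨c, hc⟩ := Nat.Partrec.Code.exists_code.1 hF
  refine ⟨fun a => Encodable.encode (c.curry (Encodable.encode a)), ?_, fun a => ?_⟩
  · exact (Primrec.encode.comp (Nat.Partrec.Code.primrec₂_curry.comp (Primrec.const c)
      Primrec.encode)).to_comp
  · ext x
    simp [W, Nat.Partrec.Code.eval_curry, hc, Part.assert]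

/-- The learner that conjectures `f σ` on the data sequence `σ`; it is undefined on numbers that
do not code a data sequence. -/
def learnerOf (f : Seq → ℕ) : Learner := fun n => (Part.ofOption (Encodable.decode n)).map f

lemma partrec_learnerOf {f : Seq → ℕ} (hf : Computable f) : Partrec (learnerOf f) :=
  Computable.decode.ofOption.map (hf.comp Computable.snd).to₂

lemma Gop_learnerOf (f : Seq → ℕ) (I : Informant) (i : ℕ) :
    Gop (learnerOf f) I i = Part.some (f (segment I i)) := by
  simp [Gop, learnerOf]

/-- With growing data consistent with `L`, the conjectures `F` never give up an element of `L`. -/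
def MonotoneFor (F : Seq → Set ℕ) (L : Set ℕ) : Prop :=
  ∀ ⦃σ τ : Seq⦄, σ ⊆ τ → ConsistentWith τ L → F σ ∩ L ⊆ F τ

/-- The data `ρ` about `L` suffice for the conjectures `F` to be correct from then on, in the
manner of a locking sequence. -/
def LocksOn (F : Seq → Set ℕ) (ρ : Seq) (L : Set ℕ) : Prop :=
  ConsistentWith ρ L ∧ ∀ ⦃σ : Seq⦄, ρ ⊆ σ → ConsistentWith σ L → F σ = L

lemma mon_learnerOf {f : Seq → ℕ} {I : Informant} {L : Set ℕ} (hI : IsInformant I L)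
    (hmono : MonotoneFor (fun σ => W (f σ)) L) : Mon (Gop (learnerOf f) I) I := by
  intro s t hst e he e' he'
  rw [Gop_learnerOf, Part.mem_some_iff] at he he'
  subst he he'
  rw [hI.1]
  exact Set.subset_inter
    (hmono (segment_subset_segment I hst) (consistentWith_segment hI t)) Set.inter_subset_right

lemma bc_learnerOf {f : Seq → ℕ} {I : Informant} {ρ : Seq} {L : Set ℕ} (hI : IsInformant I L)
    (hρ : LocksOn (fun σ => W (f σ)) ρ L) : Bc (Gop (learnerOf f) I) I := by
  filter_upwards [eventually_subset_segment hI hρ.1] with n hn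
  exact ⟨_, Gop_learnerOf f I n ▸ Part.mem_some _,
    (hρ.2 hn (consistentWith_segment hI n)).trans hI.1.symm⟩

lemma mem_learnable_mon_bc {F : Seq → Set ℕ} {𝓛 : Set (Set ℕ)} (P : Informant → Prop)
    (hF : REPred fun p : Seq × ℕ => p.2 ∈ F p.1) (hmono : ∀ L ∈ 𝓛, MonotoneFor F L)
    (hlock : ∀ L ∈ 𝓛, ∃ ρ, LocksOn F ρ L) :
    𝓛 ∈ Learnable TT AllL P Gop (fun p I => Mon p I ∧ Bc p I) := by
  obtain ⟨f, hf, hWf⟩ := exists_computable_W_eq hF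
  obtain rfl : (fun σ => W (f σ)) = F := funext hWf
  refine ⟨learnerOf f, partrec_learnerOf hf, trivial, fun _ _ _ => trivial, fun L hL => ?_⟩
  obtain ⟨ρ, hρ⟩ := hlock L hL
  exact ⟨⟨f ρ, hρ.2 (List.Subset.refl ρ) hρ.1⟩,
    fun I _ hI => ⟨mon_learnerOf hI (hmono L hL), bc_learnerOf hI hρ⟩⟩

/-! ### The languages of `class11` -/

lemma mem_X11 {x : ℕ} : x ∈ X11 ↔ x % 3 = 0 :=
  Nat.dvd_iff_mod_eq_zero

lemma mem_Y11 {n x : ℕ} :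
    x ∈ Y11 n ↔ x % 3 = 0 ∧ x < 3 * n + 3 ∨ x % 3 = 1 ∧ 3 * n + 3 ≤ x := by
  constructor
  · rintro (⟨i, hi, rfl⟩ | ⟨i, hi, rfl⟩) <;> omega
  · rintro (ha | hb)
    · exact Or.inl ⟨x / 3, by omega, by omega⟩
    · exact Or.inr ⟨x / 3, by omega, by omega⟩

lemma mem_Z11 {n m x : ℕ} :
    x ∈ Z11 n m ↔ x % 3 = 0 ∧ x < 3 * n + 3 ∨
      x % 3 = 1 ∧ 3 * n + 3 ≤ x ∧ x < 3 * m + 2 ∨ x = 3 * m + 2 := by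
  constructor
  · rintro ((⟨i, hi, rfl⟩ | ⟨i, hi, him, rfl⟩) | rfl) <;> omega
  · rintro (ha | hb | hc)
    · exact Or.inl (Or.inl ⟨x / 3, by omega, by omega⟩)
    · exact Or.inl (Or.inr ⟨x / 3, by omega, by omega, by omega⟩)
    · exact Or.inr hc

lemma X11_mem_class11 : X11 ∈ class11 := Or.inl (Or.inl rfl)

lemma Y11_mem_class11 (n : ℕ) : Y11 n ∈ class11 := Or.inl (Or.inr ⟨n, rfl⟩)

lemma Z11_mem_class11 {n m : ℕ} (hnm : n < m) : Z11 n m ∈ class11 := Or.inr ⟨n, m, hnm, rfl⟩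

lemma class11_a_mem_of_le {L : Set ℕ} (hL : L ∈ class11) {x y : ℕ} (hx : x % 3 = 0)
    (hy : y % 3 = 0) (hyx : y ≤ x) (hxL : x ∈ L) : y ∈ L := by
  rcases hL with (rfl | ⟨n, rfl⟩) | ⟨n, m, -, rfl⟩ <;>
    simp only [mem_X11, mem_Y11, mem_Z11] at hxL ⊢ <;> omega

lemma class11_b_lt_c {L : Set ℕ} (hL : L ∈ class11) {b c : ℕ} (hb : b % 3 = 1)
    (hc : c % 3 = 2) (hbL : b ∈ L) (hcL : c ∈ L) : b < c := by
  rcases hL with (rfl | ⟨n, rfl⟩) | ⟨n, m, -, rfl⟩ <;>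
    simp only [mem_X11, mem_Y11, mem_Z11] at hbL hcL <;> omega

/-! ### The conjectures of the monotone learner -/

/-- The data show that some `a_j ≤ x` is missing, so that at `x` the target has switched from the
`a_i` to the `b_i`. -/
def PastSwitch (σ : Seq) (x : ℕ) : Prop := ∃ a ∈ negS σ, a % 3 = 0 ∧ a ≤ x

/-- The data show that some `c_m < x` is present, so that the target ends before `x`. -/
def PastEnd (σ : Seq) (x : ℕ) : Prop := ∃ c ∈ posS σ, c % 3 = 2 ∧ c < x

/-- The language conjectured by the monotone learner for `class11`. -/
def conjecture (σ : Seq) : Set ℕ :=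
  {x | x % 3 = 0 ∧ ¬ PastSwitch σ x ∨ x % 3 = 1 ∧ PastSwitch σ x ∧ ¬ PastEnd σ x ∨
    x % 3 = 2 ∧ x ∈ posS σ}

lemma mem_conjecture {σ : Seq} {x : ℕ} :
    x ∈ conjecture σ ↔ x % 3 = 0 ∧ ¬ PastSwitch σ x ∨
      x % 3 = 1 ∧ PastSwitch σ x ∧ ¬ PastEnd σ x ∨ x % 3 = 2 ∧ x ∈ posS σ :=
  Iff.rfl

lemma primrecPred_exists_datum {α : Type*} [Primcodable α] (b : Bool) {R : ℕ → α → Prop}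
    (hR : PrimrecRel R) :
    PrimrecPred fun p : Seq × α => ∃ y, (y, b) ∈ p.1 ∧ R y p.2 := by
  have label_and_rel : PrimrecRel fun (d : Datum) (a : α) => d.2 = b ∧ R d.1 a :=
    (Primrec.eq.comp (Primrec.snd.comp Primrec.fst) (Primrec.const b)).and
      (hR.comp (Primrec.fst.comp Primrec.fst) Primrec.snd)
  refine PrimrecPred.of_eq label_and_rel.exists_mem_list fun p => ⟨?_, ?_⟩
  · rintro ⟨⟨y, _⟩, hd, rfl, hy⟩
    exact ⟨y, hd, hy⟩
  · rintro ⟨y, hd, hy⟩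
    exact ⟨(y, b), hd, rfl, hy⟩

lemma primrecPred_mod_eq {α : Type*} [Primcodable α] {f : α → ℕ} (hf : Primrec f) (m k : ℕ) :
    PrimrecPred fun a => f a % m = k :=
  Primrec.eq.comp (Primrec.nat_mod.comp hf (Primrec.const m)) (Primrec.const k)

lemma primrecPred_pastSwitch : PrimrecPred fun p : Seq × ℕ => PastSwitch p.1 p.2 :=
  primrecPred_exists_datum false (R := fun y x => y % 3 = 0 ∧ y ≤ x)
    ((primrecPred_mod_eq Primrec.fst 3 0).and Primrec.nat_le)

lemma primrecPred_pastEnd : PrimrecPred fun p : Seq × ℕ => PastEnd p.1 p.2 :=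
  primrecPred_exists_datum true (R := fun y x => y % 3 = 2 ∧ y < x)
    ((primrecPred_mod_eq Primrec.fst 3 2).and Primrec.nat_lt)

lemma primrecPred_mem_posS : PrimrecPred fun p : Seq × ℕ => p.2 ∈ posS p.1 :=
  (primrecPred_exists_datum true Primrec.eq).of_eq fun p => by simp [posS]

lemma primrecPred_mem_conjecture : PrimrecPred fun p : Seq × ℕ => p.2 ∈ conjecture p.1 :=
  ((primrecPred_mod_eq Primrec.snd 3 0).and primrecPred_pastSwitch.not).or
    (((primrecPred_mod_eq Primrec.snd 3 1).and
      (primrecPred_pastSwitch.and primrecPred_pastEnd.not)).or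
        ((primrecPred_mod_eq Primrec.snd 3 2).and primrecPred_mem_posS))

lemma PastSwitch.mono {σ τ : Seq} (hστ : σ ⊆ τ) {x : ℕ} : PastSwitch σ x → PastSwitch τ x
  | ⟨a, ha, hax⟩ => ⟨a, hστ ha, hax⟩

lemma monotoneFor_conjecture {L : Set ℕ}
    (ha : ∀ ⦃x y⦄, x % 3 = 0 → y % 3 = 0 → y ≤ x → x ∈ L → y ∈ L)
    (hbc : ∀ ⦃b c⦄, b % 3 = 1 → c % 3 = 2 → b ∈ L → c ∈ L → b < c) :
    MonotoneFor conjecture L := by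
  rintro σ τ hστ hτ x ⟨⟨hx, -⟩ | ⟨hx, hswitch, -⟩ | ⟨hx, hpos⟩, hxL⟩
  · refine Or.inl ⟨hx, ?_⟩
    rintro ⟨a, haτ, ha0, hax⟩
    exact hτ.2 haτ (ha hx ha0 hax hxL)
  · refine Or.inr (Or.inl ⟨hx, hswitch.mono hστ, ?_⟩)
    rintro ⟨c, hcτ, hc2, hcx⟩
    exact hcx.not_gt (hbc hx hc2 hxL (hτ.1 hcτ))
  · exact Or.inr (Or.inr ⟨hx, hστ hpos⟩)

lemma pastSwitch_iff {σ : Seq} {L : Set ℕ} {n : ℕ} (hσ : ConsistentWith σ L)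
    (hL : ∀ a, a % 3 = 0 → a < 3 * n + 3 → a ∈ L) (hn : 3 * n + 3 ∈ negS σ) (x : ℕ) :
    PastSwitch σ x ↔ 3 * n + 3 ≤ x := by
  constructor
  · rintro ⟨a, haσ, ha0, hax⟩
    exact (not_lt.1 fun han => hσ.2 haσ (hL a ha0 han)).trans hax
  · exact fun hx => ⟨_, hn, by omega, hx⟩

lemma locksOn_X11 : LocksOn conjecture [] X11 := by
  refine ⟨by simp [ConsistentWith, posS, negS], fun σ _ hσ => ?_⟩
  have not_pastSwitch (x : ℕ) : ¬ PastSwitch σ x := fun ⟨a, haσ, ha0, _⟩ =>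
    hσ.2 haσ (mem_X11.2 ha0)
  ext x
  have hpos : x ∈ posS σ → x % 3 = 0 := fun hx => mem_X11.1 (hσ.1 hx)
  simp only [mem_conjecture, mem_X11, not_pastSwitch]
  grind

lemma locksOn_Y11 (n : ℕ) : LocksOn conjecture [(3 * n + 3, false)] (Y11 n) := by
  refine ⟨by simp [ConsistentWith, posS, negS, mem_Y11], fun σ hρσ hσ => ?_⟩
  have hswitch := pastSwitch_iff (n := n) hσ (fun a _ _ => mem_Y11.2 (by omega))
    (hρσ List.mem_cons_self)
  have not_c_mem (c : ℕ) (hc : c % 3 = 2) : c ∉ posS σ := fun hcσ => by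
    have := mem_Y11.1 (hσ.1 hcσ)
    omega
  have not_pastEnd (x : ℕ) : ¬ PastEnd σ x := fun ⟨c, hcσ, hc2, _⟩ => not_c_mem c hc2 hcσ
  ext x
  have := not_c_mem x
  simp only [mem_conjecture, mem_Y11, hswitch, not_pastEnd]
  grind

lemma locksOn_Z11 (n m : ℕ) :
    LocksOn conjecture [(3 * n + 3, false), (3 * m + 2, true)] (Z11 n m) := by
  refine ⟨⟨?_, ?_⟩, fun σ hρσ hσ => ?_⟩
  · simp [posS, mem_Z11]
  · suffices 3 * n + 3 ∉ Z11 n m by simpa [negS] using this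
    rw [mem_Z11]
    omega
  have hswitch := pastSwitch_iff (n := n) hσ (fun a _ _ => mem_Z11.2 (by omega))
    (hρσ List.mem_cons_self)
  have hm : 3 * m + 2 ∈ posS σ := hρσ (List.mem_cons_of_mem _ List.mem_cons_self)
  have c_mem_iff (c : ℕ) (hc : c % 3 = 2) : c ∈ posS σ ↔ c = 3 * m + 2 := by
    refine ⟨fun hcσ => ?_, fun hcm => hcm ▸ hm⟩
    have := mem_Z11.1 (hσ.1 hcσ)
    omega
  have hend (x : ℕ) : PastEnd σ x ↔ 3 * m + 2 < x := by
    refine ⟨?_, fun hx => ⟨_, hm, by omega, hx⟩⟩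
    rintro ⟨c, hcσ, hc2, hcx⟩
    exact (c_mem_iff c hc2).1 hcσ ▸ hcx
  ext x
  have := c_mem_iff x
  simp only [mem_conjecture, mem_Z11, hswitch, hend]
  grind

lemma exists_locksOn_of_mem_class11 {L : Set ℕ} (hL : L ∈ class11) :
    ∃ ρ, LocksOn conjecture ρ L := by
  rcases hL with (rfl | ⟨n, rfl⟩) | ⟨n, m, -, rfl⟩
  exacts [⟨_, locksOn_X11⟩, ⟨_, locksOn_Y11 n⟩, ⟨_, locksOn_Z11 n m⟩]

lemma class11_mem_learnable_mon_bc :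
    class11 ∈ Learnable TT AllL AllI Gop (fun p I => Mon p I ∧ Bc p I) :=
  mem_learnable_mon_bc AllI primrecPred_mem_conjecture.computablePred.to_re
    (fun _ hL => monotoneFor_conjecture (fun _ _ => class11_a_mem_of_le hL)
      fun _ _ => class11_b_lt_c hL)
    fun _ => exists_locksOn_of_mem_class11

lemma class11_notMem_learnable_mond_bc :
    class11 ∉ Learnable TT AllL AllI Gop (fun p I => Mond p I ∧ Bc p I) := by
  refine notMem_learnable_mond_bc (fun _ => trivial) X11_mem_class11 fun s =>
    ⟨Y11 s, Y11_mem_class11 s, fun t hst =>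
      ⟨Z11 s (t + 1), Z11_mem_class11 (by omega), ?_, ?_, 3 * (t + 2) + 1, ?_⟩⟩ <;>
  · simp only [mem_X11, mem_Y11, mem_Z11]
    omega

/-- `class11` witnesses
`[Inf G Mon Bc] \ [Inf G Mon^d Bc] ≠ ∅`. -/
theorem mon_minus_dual_mon :
    class11 ∈
      Learnable TT AllL AllI Gop (fun p I => Mon p I ∧ Bc p I) \
        Learnable TT AllL AllI Gop (fun p I => Mond p I ∧ Bc p I) :=
  ⟨class11_mem_learnable_mon_bc, class11_notMem_learnable_mond_bc⟩

end InfBc
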